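/- A quasi-hyperbolic continuous linear cocycle over a compact base is hyperbolic over the non-wandering set Ω(ψ|_𝐁) of the base flow. -/

import Mathlib

open Filter Topology

/-- A continuous linear cocycle (`ℝ`-action by bundle isomorphisms on the
trivial vector bundle `B × E`) over a continuous flow on `B`. -/
structure LinearCocycle (B E : Type*) [TopologicalSpace B]
    [NormedAddCommGroup E] [NormedSpace ℝ E] where
  flow : ℝ → B → B
  flow_cont : Continuous fun p : ℝ × B => flow p.1 p.2
  flow_zero : ∀ b, flow 0 b = b
  flow_add : ∀ s t b, flow s (flow t b) = flow (s + t) b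
  P : ℝ → B → E →L[ℝ] E
  P_cont : Continuous fun p : ℝ × B => P p.1 p.2
  P_zero : ∀ b, P 0 b = ContinuousLinearMap.id ℝ E
  P_comp : ∀ s t b, (P s (flow t b)).comp (P t b) = P (s + t) b

variable {B E : Type*} [TopologicalSpace B]
  [NormedAddCommGroup E] [NormedSpace ℝ E]

/-- Quasi-hyperbolicity: every nonzero vector has unbounded orbit. -/
def LinearCocycle.IsQuasiHyperbolic (Φ : LinearCocycle B E) : Prop :=
  ∀ b : B, ∀ v : E, v ≠ 0 → ∀ C : ℝ, ∃ t : ℝ, C < ‖Φ.P t b v‖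

/-- The subspace of vectors with bounded forward orbit. -/
def LinearCocycle.stable (Φ : LinearCocycle B E) (b : B) : Submodule ℝ E where
  carrier := {v | ∃ C : ℝ, ∀ t > (0:ℝ), ‖Φ.P t b v‖ ≤ C}
  add_mem' := by
    rintro u v ⟨C₁, h₁⟩ ⟨C₂, h₂⟩
    exact ⟨C₁ + C₂, fun t ht => by
      simpa [map_add] using (norm_add_le (Φ.P t b u) (Φ.P t b v)).trans
        (add_le_add (h₁ t ht) (h₂ t ht))⟩
  zero_mem' := ⟨0, fun t ht => by simp⟩
  smul_mem' := by
    rintro c v ⟨C, h⟩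
    exact ⟨‖c‖ * C, fun t ht => by
      rw [map_smul, norm_smul]
      exact mul_le_mul_of_nonneg_left (h t ht) (norm_nonneg c)⟩

/-- The subspace of vectors with bounded backward orbit. -/
def LinearCocycle.unstable (Φ : LinearCocycle B E) (b : B) : Submodule ℝ E where
  carrier := {v | ∃ C : ℝ, ∀ t > (0:ℝ), ‖Φ.P (-t) b v‖ ≤ C}
  add_mem' := by
    rintro u v ⟨C₁, h₁⟩ ⟨C₂, h₂⟩
    exact ⟨C₁ + C₂, fun t ht => by
      simpa [map_add] using (norm_add_le (Φ.P (-t) b u) (Φ.P (-t) b v)).trans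
        (add_le_add (h₁ t ht) (h₂ t ht))⟩
  zero_mem' := ⟨0, fun t ht => by simp⟩
  smul_mem' := by
    rintro c v ⟨C, h⟩
    exact ⟨‖c‖ * C, fun t ht => by
      rw [map_smul, norm_smul]
      exact mul_le_mul_of_nonneg_left (h t ht) (norm_nonneg c)⟩

/-- Uniform hyperbolicity of a linear cocycle over an invariant subset `Λ`. -/
def LinearCocycle.IsHyperbolicOn (Φ : LinearCocycle B E) (Λ : Set B) : Prop :=
  ∃ Es Eu : B → Submodule ℝ E,
    (∀ t : ℝ, ∀ b ∈ Λ, (Es b).map (Φ.P t b : E →ₗ[ℝ] E) = Es (Φ.flow t b)) ∧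
    (∀ t : ℝ, ∀ b ∈ Λ, (Eu b).map (Φ.P t b : E →ₗ[ℝ] E) = Eu (Φ.flow t b)) ∧
    (∀ b ∈ Λ, IsCompl (Es b) (Eu b)) ∧
    ∃ T > (0:ℝ), ∀ b ∈ Λ,
      (∀ v ∈ Es b, v ≠ 0 → ‖Φ.P T b v‖ < (1/2) * ‖v‖) ∧
      (∀ v ∈ Eu b, v ≠ 0 → ‖Φ.P (-T) b v‖ < (1/2) * ‖v‖)

/-- The non-wandering set of the base flow of the cocycle: points `x` such
that every neighborhood `U` of `x` returns to itself at arbitrarily large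
times. -/
def LinearCocycle.nonWandering (Φ : LinearCocycle B E) : Set B :=
  {x | ∀ U ∈ 𝓝 x, ∀ T > (0:ℝ), ∃ t > T, (Φ.flow t '' U ∩ U).Nonempty}

/-!
By compactness quasi-hyperbolicity is uniform: there are `T` and `K` such that every vector is
at least doubled at some time in `[-T, T]` and expanded at most by the factor `K` at every such
time. So the norm along an orbit segment cannot peak further than `T` from both ends of the segment
and is at most `K` times the larger of the two norms at the ends. Together with the doubling this
makes vectors with bounded forward orbit decay uniformly exponentially, vectors with bounded
backward orbit do so in reversed time, and only `0` has both properties.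

For the splitting at a non-wandering point `x` it remains to see `dim E ≤ dim Eˢ + dim Eᵘ`. Let `F`
and `G` be complements of `Eˢ` and `Eᵘ` at `x`. Over base points near `x`, every nonzero vector of
`F` grows by more than the factor `K` in bounded forward time, and every nonzero vector of `G` in
bounded backward time. If the orbit of a point near `x` returns near `x` after a long time, a
nonzero vector of `F` carried into `G` would on the way exceed `K` times its norm at the start and,
likewise, at the end, so each of these two norms would be smaller than the other. So the image of
`F` meets `G` trivially, and `dim F + dim G ≤ dim E`.
-/

lemma exists_eventually_nhdsSet_exists_lt {X : Type*} [TopologicalSpace X] {S : Set X}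
    (hS : IsCompact S) {f : ℝ → X → ℝ} (hf : ∀ t, LowerSemicontinuous (f t)) {I : Set ℝ} {c : ℝ}
    (h : ∀ x ∈ S, ∃ t ∈ I, c < f t x) :
    ∃ T, ∀ᶠ x in 𝓝ˢ S, ∃ t ∈ I, |t| ≤ T ∧ c < f t x := by
  let V (T : ℝ) : Set X := ⋃ t ∈ {t ∈ I | |t| ≤ T}, f t ⁻¹' Set.Ioi c
  have V_open (T : ℝ) : IsOpen (V T) := isOpen_biUnion fun t _ => (hf t).isOpen_preimage c
  have V_mono : Monotone V := fun T T' hT =>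
    Set.biUnion_subset_biUnion_left fun t ht => ⟨ht.1, ht.2.trans hT⟩
  have V_cover : S ⊆ ⋃ T, V T := fun x hx => by
    obtain ⟨t, htI, ht⟩ := h x hx
    exact Set.mem_iUnion.2 ⟨|t|, Set.mem_biUnion ⟨htI, le_rfl⟩ ht⟩
  obtain ⟨T, hT⟩ := hS.elim_directed_cover V V_open V_cover V_mono.directed_le
  refine ⟨T, mem_of_superset ((V_open T).mem_nhdsSet.2 hT) fun x hx => ?_⟩
  simpa [V, and_assoc] using hx

namespace LinearCocycle

section Basic

variable (Φ : LinearCocycle B E)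

lemma P_add_apply (s t : ℝ) (b : B) (v : E) :
    Φ.P (s + t) b v = Φ.P s (Φ.flow t b) (Φ.P t b v) := by
  rw [← Φ.P_comp, ContinuousLinearMap.comp_apply]

lemma P_zero_apply (b : B) (v : E) : Φ.P 0 b v = v := by
  rw [Φ.P_zero, ContinuousLinearMap.id_apply]

lemma P_neg_apply_P_apply (t : ℝ) (b : B) (v : E) :
    Φ.P (-t) (Φ.flow t b) (Φ.P t b v) = v := by
  rw [← P_add_apply, neg_add_cancel, P_zero_apply]

lemma flow_neg_flow (t : ℝ) (b : B) : Φ.flow (-t) (Φ.flow t b) = b := by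
  rw [Φ.flow_add, neg_add_cancel, Φ.flow_zero]

lemma P_apply_P_neg_apply (t : ℝ) (b : B) (v : E) :
    Φ.P t b (Φ.P (-t) (Φ.flow t b) v) = v := by
  simpa only [neg_neg, flow_neg_flow] using Φ.P_neg_apply_P_apply (-t) (Φ.flow t b) v

lemma P_injective (t : ℝ) (b : B) : Function.Injective (Φ.P t b) :=
  Function.LeftInverse.injective (Φ.P_neg_apply_P_apply t b)

lemma continuous_P_apply_apply (t : ℝ) : Continuous fun p : B × E => Φ.P t p.1 p.2 :=
  (Φ.P_cont.comp (by fun_prop : Continuous fun p : B × E => (t, p.1))).clm_apply continuous_snd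

lemma continuous_orbit (b : B) (v : E) : Continuous fun t => Φ.P t b v :=
  (Φ.P_cont.comp (by fun_prop : Continuous fun t : ℝ => (t, b))).clm_apply continuous_const

/-- The time-reversed cocycle, which exchanges the stable and the unstable subspaces. -/
def reverse : LinearCocycle B E where
  flow t b := Φ.flow (-t) b
  flow_cont := Φ.flow_cont.comp (by fun_prop : Continuous fun p : ℝ × B => (-p.1, p.2))
  flow_zero b := by rw [neg_zero, Φ.flow_zero]
  flow_add s t b := by rw [Φ.flow_add, neg_add]
  P t b := Φ.P (-t) b
  P_cont := Φ.P_cont.comp (by fun_prop : Continuous fun p : ℝ × B => (-p.1, p.2))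
  P_zero b := by rw [neg_zero, Φ.P_zero]
  P_comp s t b := by rw [Φ.P_comp, neg_add]

lemma reverse_P (t : ℝ) (b : B) : Φ.reverse.P t b = Φ.P (-t) b := rfl

lemma reverse_flow (t : ℝ) (b : B) : Φ.reverse.flow t b = Φ.flow (-t) b := rfl

lemma reverse_stable (b : B) : Φ.reverse.stable b = Φ.unstable b := rfl

end Basic

section StableUnstable

variable (Φ : LinearCocycle B E)

lemma P_apply_mem_stable (t : ℝ) {b : B} {v : E} (hv : v ∈ Φ.stable b) :
    Φ.P t b v ∈ Φ.stable (Φ.flow t b) := by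
  obtain ⟨C, hC⟩ := hv
  obtain ⟨D, hD⟩ := (isCompact_Icc (a := t) (b := 0)).exists_bound_of_continuousOn
    (Φ.continuous_orbit b v).continuousOn
  refine ⟨max C D, fun s hs => ?_⟩
  rw [← P_add_apply]
  rcases lt_or_ge 0 (s + t) with hpos | hnonpos
  · exact (hC _ hpos).trans (le_max_left _ _)
  · exact (hD _ ⟨by linarith, hnonpos⟩).trans (le_max_right _ _)

lemma map_stable (t : ℝ) (b : B) :
    (Φ.stable b).map (Φ.P t b : E →ₗ[ℝ] E) = Φ.stable (Φ.flow t b) := by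
  apply le_antisymm
  · rintro _ ⟨v, hv, rfl⟩
    exact Φ.P_apply_mem_stable t hv
  · intro w hw
    refine ⟨Φ.P (-t) (Φ.flow t b) w, ?_, Φ.P_apply_P_neg_apply t b w⟩
    simpa only [flow_neg_flow, SetLike.mem_coe] using Φ.P_apply_mem_stable (-t) hw

lemma map_unstable (t : ℝ) (b : B) :
    (Φ.unstable b).map (Φ.P t b : E →ₗ[ℝ] E) = Φ.unstable (Φ.flow t b) := by
  simpa only [reverse_P, reverse_flow, reverse_stable, neg_neg] using Φ.reverse.map_stable (-t) b

end StableUnstable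

section Compactness

variable {Φ : LinearCocycle B E}

lemma exists_eventually_nhdsSet_lt_norm_P_apply {S : Set B} (hS : IsCompact S)
    {F : Submodule ℝ E} [FiniteDimensional ℝ F] {I : Set ℝ} {c : ℝ}
    (h : ∀ b ∈ S, ∀ v ∈ F, v ≠ 0 → ∃ t ∈ I, c * ‖v‖ < ‖Φ.P t b v‖) :
    ∃ T, ∀ᶠ b in 𝓝ˢ S, ∀ v ∈ F, v ≠ 0 → ∃ t ∈ I, |t| ≤ T ∧ c * ‖v‖ < ‖Φ.P t b v‖ := by
  have : ProperSpace F := FiniteDimensional.proper ℝ F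
  have sphere_compact : IsCompact (Metric.sphere (0 : F) 1) := isCompact_sphere 0 1
  have norm_continuous (t : ℝ) : Continuous fun p : B × F => ‖Φ.P t p.1 p.2‖ :=
    ((Φ.continuous_P_apply_apply t).comp
      (by fun_prop : Continuous fun p : B × F => (p.1, (p.2 : E)))).norm
  obtain ⟨T, hT⟩ := exists_eventually_nhdsSet_exists_lt (hS.prod sphere_compact)
    (fun t => (norm_continuous t).lowerSemicontinuous) (I := I) (c := c) fun ⟨b, u⟩ ⟨hb, hu⟩ => by
      have u_norm : ‖(u : E)‖ = 1 := mem_sphere_zero_iff_norm.1 hu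
      simpa only [u_norm, mul_one] using h b hb u u.2 (norm_ne_zero_iff.1 (by simp [u_norm]))
  rw [hS.nhdsSet_prod_eq sphere_compact] at hT
  refine ⟨T, hT.curry.mono fun b hb v hvF hv => ?_⟩
  have v_norm : 0 < ‖v‖ := norm_pos_iff.2 hv
  obtain ⟨t, htI, htT, ht⟩ := hb.self_of_nhdsSet ⟨‖v‖⁻¹ • v, F.smul_mem _ hvF⟩
    (by simp [norm_smul, v_norm.ne'])
  refine ⟨t, htI, htT, ?_⟩
  rwa [map_smul, norm_smul, norm_inv, norm_norm, inv_mul_eq_div, lt_div_iff₀ v_norm] at ht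

lemma exists_eventually_lt_norm_P_apply_of_disjoint_stable {x : B} {F : Submodule ℝ E}
    [FiniteDimensional ℝ F] (hF : Disjoint (Φ.stable x) F) (c : ℝ) :
    ∃ T, ∀ᶠ y in 𝓝 x, ∀ v ∈ F, v ≠ 0 → ∃ t ∈ Set.Icc 0 T, c * ‖v‖ < ‖Φ.P t y v‖ := by
  have growth_at : ∀ b ∈ ({x} : Set B), ∀ v ∈ F, v ≠ 0 →
      ∃ t ∈ Set.Ioi 0, c * ‖v‖ < ‖Φ.P t b v‖ := by
    rintro _ rfl v hvF hv
    by_contra! hbounded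
    exact hv (Submodule.disjoint_def.1 hF v ⟨c * ‖v‖, hbounded⟩ hvF)
  obtain ⟨T, hT⟩ := exists_eventually_nhdsSet_lt_norm_P_apply isCompact_singleton growth_at
  rw [nhdsSet_singleton] at hT
  refine ⟨T, hT.mono fun y hy v hvF hv => ?_⟩
  obtain ⟨t, htpos, htT, ht⟩ := hy v hvF hv
  exact ⟨t, ⟨le_of_lt htpos, (le_abs_self t).trans htT⟩, ht⟩

/-- Quasi-hyperbolicity with uniform constants: within the time window `[-T, T]` every vector is
at least doubled at some time and expanded at most by the factor `K`. Over a compact base this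
follows from quasi-hyperbolicity. -/
structure IsUniformlyQuasiHyperbolic (Φ : LinearCocycle B E) (T K : ℝ) : Prop where
  norm_P_apply_le : ∀ b v t, |t| ≤ T → ‖Φ.P t b v‖ ≤ K * ‖v‖
  exists_two_mul_norm_le : ∀ b v, ∃ t, |t| ≤ T ∧ 2 * ‖v‖ ≤ ‖Φ.P t b v‖

lemma IsQuasiHyperbolic.exists_isUniformlyQuasiHyperbolic [CompactSpace B]
    [FiniteDimensional ℝ E] (hqh : Φ.IsQuasiHyperbolic) :
    ∃ T K, Φ.IsUniformlyQuasiHyperbolic T K := by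
  obtain ⟨T, hT⟩ := exists_eventually_nhdsSet_lt_norm_P_apply (Φ := Φ) isCompact_univ
    (F := ⊤) (I := Set.univ) (c := 2) fun b _ v _ hv => by simpa using hqh b v hv (2 * ‖v‖)
  rw [nhdsSet_univ, eventually_top] at hT
  obtain ⟨K, hK⟩ := ((isCompact_Icc (a := -max T 0) (b := max T 0)).prod
    (isCompact_univ (X := B))).exists_bound_of_continuousOn Φ.P_cont.continuousOn
  refine ⟨max T 0, K, fun b v t ht => ?_, fun b v => ?_⟩
  · exact (Φ.P t b).le_of_opNorm_le (hK (t, b) ⟨abs_le.1 ht, trivial⟩) v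
  · rcases eq_or_ne v 0 with rfl | hv
    · exact ⟨0, by simp⟩
    · obtain ⟨t, -, htT, ht⟩ := hT b v Submodule.mem_top hv
      exact ⟨t, le_max_of_le_left htT, ht.le⟩

end Compactness

namespace IsUniformlyQuasiHyperbolic

variable {Φ : LinearCocycle B E} {T K : ℝ}

lemma reverse (h : Φ.IsUniformlyQuasiHyperbolic T K) :
    Φ.reverse.IsUniformlyQuasiHyperbolic T K where
  norm_P_apply_le b v t ht := h.norm_P_apply_le b v (-t) (by rwa [abs_neg])
  exists_two_mul_norm_le b v := by
    obtain ⟨t, htT, ht⟩ := h.exists_two_mul_norm_le b v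
    exact ⟨-t, by rwa [abs_neg], by rwa [reverse_P, neg_neg]⟩

lemma norm_P_apply_le_of_abs_sub_le (h : Φ.IsUniformlyQuasiHyperbolic T K) (b : B) (v : E)
    {s t : ℝ} (hst : |s - t| ≤ T) : ‖Φ.P s b v‖ ≤ K * ‖Φ.P t b v‖ := by
  simpa only [← P_add_apply, sub_add_cancel] using
    h.norm_P_apply_le (Φ.flow t b) (Φ.P t b v) (s - t) hst

lemma exists_abs_sub_le_two_mul_norm_le (h : Φ.IsUniformlyQuasiHyperbolic T K) (b : B) (v : E)
    (t : ℝ) : ∃ s, |s - t| ≤ T ∧ 2 * ‖Φ.P t b v‖ ≤ ‖Φ.P s b v‖ := by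
  obtain ⟨r, hrT, hr⟩ := h.exists_two_mul_norm_le (Φ.flow t b) (Φ.P t b v)
  exact ⟨r + t, by rwa [add_sub_cancel_right], by rwa [P_add_apply]⟩

lemma mul_norm_nonneg (h : Φ.IsUniformlyQuasiHyperbolic T K) (b : B) (v : E) : 0 ≤ K * ‖v‖ := by
  obtain ⟨t, htT, -⟩ := h.exists_two_mul_norm_le b v
  exact (norm_nonneg _).trans (h.norm_P_apply_le b v t htT)

lemma norm_P_apply_le_max (h : Φ.IsUniformlyQuasiHyperbolic T K) (b : B) (v : E) {a c t : ℝ}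
    (ht : t ∈ Set.Icc a c) : ‖Φ.P t b v‖ ≤ max (K * ‖Φ.P a b v‖) (K * ‖Φ.P c b v‖) := by
  obtain ⟨m, hm, hmax⟩ := isCompact_Icc.exists_isMaxOn ⟨t, ht⟩
    (Φ.continuous_orbit b v).norm.continuousOn
  refine (hmax ht : ‖Φ.P t b v‖ ≤ ‖Φ.P m b v‖).trans ?_
  rcases le_or_gt (m - a) T with hma | hma
  · exact le_max_of_le_left (h.norm_P_apply_le_of_abs_sub_le b v
      (by rwa [abs_of_nonneg (sub_nonneg.2 hm.1)]))
  rcases le_or_gt (c - m) T with hmc | hmc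
  · exact le_max_of_le_right (h.norm_P_apply_le_of_abs_sub_le b v
      (by rwa [abs_sub_comm, abs_of_nonneg (sub_nonneg.2 hm.2)]))
  obtain ⟨s, hsm, hs⟩ := h.exists_abs_sub_le_two_mul_norm_le b v m
  rw [abs_le] at hsm
  have s_le_m : ‖Φ.P s b v‖ ≤ ‖Φ.P m b v‖ := hmax ⟨by linarith, by linarith⟩
  exact le_max_of_le_left (by linarith [h.mul_norm_nonneg b (Φ.P a b v)])

lemma norm_P_apply_le_div_two_pow (h : Φ.IsUniformlyQuasiHyperbolic T K) {b : B} {v : E}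
    {a M : ℝ} (hM : ∀ t ≥ a, ‖Φ.P t b v‖ ≤ M) (n : ℕ) :
    ∀ t ≥ a + n * T, ‖Φ.P t b v‖ ≤ M / 2 ^ n := by
  induction n with
  | zero => simpa using hM
  | succ n ih =>
    intro t ht
    push_cast at ht
    obtain ⟨s, hst, hs⟩ := h.exists_abs_sub_le_two_mul_norm_le b v t
    have s_bound := ih s (by linarith [(abs_le.1 hst).1])
    rw [pow_succ, ← div_div]
    linarith

lemma tendsto_P_apply_of_mem_stable (h : Φ.IsUniformlyQuasiHyperbolic T K) {b : B} {v : E}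
    (hv : v ∈ Φ.stable b) : Tendsto (fun t => Φ.P t b v) atTop (𝓝 0) := by
  obtain ⟨C, hC⟩ := hv
  refine NormedAddGroup.tendsto_nhds_zero.2 fun ε hε => ?_
  obtain ⟨n, hn⟩ := pow_unbounded_of_one_lt (C / ε) (one_lt_two (α := ℝ))
  filter_upwards [eventually_ge_atTop (1 + n * T)] with t ht
  exact (h.norm_P_apply_le_div_two_pow (fun s hs => hC s (one_pos.trans_le hs)) n t ht).trans_lt
    ((div_lt_comm₀ hε (by positivity)).1 hn)

lemma norm_P_apply_le_of_mem_stable (h : Φ.IsUniformlyQuasiHyperbolic T K) {b : B} {v : E}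
    (hv : v ∈ Φ.stable b) {t : ℝ} (ht : 0 ≤ t) : ‖Φ.P t b v‖ ≤ K * ‖v‖ := by
  have le_max_of_ge {L : ℝ} (hL : t ≤ L) :
      ‖Φ.P t b v‖ ≤ max (K * ‖v‖) (K * ‖Φ.P L b v‖) := by
    simpa only [P_zero_apply] using h.norm_P_apply_le_max b v ⟨ht, hL⟩
  have limit : Tendsto (fun L => max (K * ‖v‖) (K * ‖Φ.P L b v‖)) atTop
      (𝓝 (max (K * ‖v‖) (K * ‖(0 : E)‖))) :=
    tendsto_const_nhds.max ((h.tendsto_P_apply_of_mem_stable hv).norm.const_mul K)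
  simpa only [norm_zero, mul_zero, max_eq_left (h.mul_norm_nonneg b v)] using
    ge_of_tendsto limit ((eventually_ge_atTop t).mono fun _ => le_max_of_ge)

lemma exists_forall_ge_norm_P_apply_lt (h : Φ.IsUniformlyQuasiHyperbolic T K) {ε : ℝ}
    (hε : 0 < ε) :
    ∃ S > 0, ∀ t ≥ S, ∀ b, ∀ v ∈ Φ.stable b, v ≠ 0 → ‖Φ.P t b v‖ < ε * ‖v‖ := by
  obtain ⟨n, hn⟩ := pow_unbounded_of_one_lt (K / ε) (one_lt_two (α := ℝ))
  refine ⟨max 1 (n * T), by positivity, fun t ht b v hv hv0 => ?_⟩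
  have decay : ‖Φ.P t b v‖ ≤ K * ‖v‖ / 2 ^ n :=
    h.norm_P_apply_le_div_two_pow (fun s hs => h.norm_P_apply_le_of_mem_stable hv hs) n t
      (by simpa using (le_max_right _ _).trans ht)
  refine decay.trans_lt ?_
  rw [mul_div_right_comm]
  exact mul_lt_mul_of_pos_right ((div_lt_comm₀ hε (by positivity)).1 hn) (norm_pos_iff.2 hv0)

lemma disjoint_stable_unstable (h : Φ.IsUniformlyQuasiHyperbolic T K) (b : B) :
    Disjoint (Φ.stable b) (Φ.unstable b) := by
  refine Submodule.disjoint_def.2 fun v hs hu => norm_le_zero_iff.1 ?_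
  have le_max_of_nonneg {L : ℝ} (hL : 0 ≤ L) :
      ‖v‖ ≤ max (K * ‖Φ.P (-L) b v‖) (K * ‖Φ.P L b v‖) := by
    simpa only [P_zero_apply] using h.norm_P_apply_le_max b v ⟨neg_nonpos.2 hL, hL⟩
  have limit : Tendsto (fun L => max (K * ‖Φ.P (-L) b v‖) (K * ‖Φ.P L b v‖)) atTop
      (𝓝 (max (K * ‖(0 : E)‖) (K * ‖(0 : E)‖))) :=
    ((h.reverse.tendsto_P_apply_of_mem_stable hu).norm.const_mul K).max
      ((h.tendsto_P_apply_of_mem_stable hs).norm.const_mul K)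
  simpa only [norm_zero, mul_zero, max_self] using
    ge_of_tendsto limit ((eventually_ge_atTop 0).mono fun _ => le_max_of_nonneg)

lemma disjoint_map_of_lt_norm_P_apply (h : Φ.IsUniformlyQuasiHyperbolic T K) {b : B} {L : ℝ}
    {F G : Submodule ℝ E}
    (hF : ∀ v ∈ F, v ≠ 0 → ∃ t ∈ Set.Icc 0 L, K * ‖v‖ < ‖Φ.P t b v‖)
    (hG : ∀ w ∈ G, w ≠ 0 → ∃ t ∈ Set.Icc 0 L, K * ‖w‖ < ‖Φ.P (-t) (Φ.flow L b) w‖) :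
    Disjoint (F.map (Φ.P L b : E →ₗ[ℝ] E)) G := by
  rw [Submodule.disjoint_def]
  rintro _ ⟨v, hvF, rfl⟩ hvG
  rw [ContinuousLinearMap.coe_coe] at hvG ⊢
  by_contra hw
  obtain ⟨t, ht, hvt⟩ := hF v hvF (by rintro rfl; exact hw (map_zero _))
  obtain ⟨s, hs, hws⟩ := hG _ hvG hw
  rw [← P_add_apply] at hws
  have orbit_le {r : ℝ} (hr : r ∈ Set.Icc 0 L) :
      ‖Φ.P r b v‖ ≤ max (K * ‖v‖) (K * ‖Φ.P L b v‖) := by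
    simpa only [P_zero_apply] using h.norm_P_apply_le_max b v hr
  have start_lt_end : K * ‖v‖ < K * ‖Φ.P L b v‖ :=
    (lt_max_iff.1 (hvt.trans_le (orbit_le ht))).resolve_left (lt_irrefl _)
  have end_lt_start : K * ‖Φ.P L b v‖ < K * ‖v‖ :=
    (lt_max_iff.1 (hws.trans_le (orbit_le ⟨by linarith [hs.2], by linarith [hs.1]⟩))).resolve_right
      (lt_irrefl _)
  exact start_lt_end.asymm end_lt_start

lemma finrank_le_finrank_stable_add_finrank_unstable [FiniteDimensional ℝ E]
    (h : Φ.IsUniformlyQuasiHyperbolic T K) {x : B} (hx : x ∈ Φ.nonWandering) :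
    Module.finrank ℝ E ≤ Module.finrank ℝ (Φ.stable x) + Module.finrank ℝ (Φ.unstable x) := by
  obtain ⟨F, hF⟩ := (Φ.stable x).exists_isCompl
  obtain ⟨G, hG⟩ := (Φ.unstable x).exists_isCompl
  obtain ⟨T₁, hT₁⟩ := exists_eventually_lt_norm_P_apply_of_disjoint_stable hF.disjoint K
  obtain ⟨T₂, hT₂⟩ :=
    exists_eventually_lt_norm_P_apply_of_disjoint_stable (Φ := Φ.reverse) hG.disjoint K
  obtain ⟨L, hL, _, ⟨z, hz, rfl⟩, hz'⟩ :=
    hx _ (hT₁.and hT₂) (max 1 (max T₁ T₂)) (by positivity)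
  simp only [gt_iff_lt, max_lt_iff] at hL
  have disjoint_images : Disjoint (F.map (Φ.P L z : E →ₗ[ℝ] E)) G := by
    refine h.disjoint_map_of_lt_norm_P_apply (fun v hvF hv => ?_) fun w hwG hw => ?_
    · obtain ⟨t, ht, hvt⟩ := hz.1 v hvF hv
      exact ⟨t, ⟨ht.1, ht.2.trans hL.2.1.le⟩, hvt⟩
    · obtain ⟨t, ht, hwt⟩ := hz'.2 w hwG hw
      exact ⟨t, ⟨ht.1, ht.2.trans hL.2.2.le⟩, hwt⟩
  have finrank_map : Module.finrank ℝ (F.map (Φ.P L z : E →ₗ[ℝ] E)) = Module.finrank ℝ F :=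
    (F.equivMapOfInjective _ (Φ.P_injective L z)).finrank_eq.symm
  have finrank_images := Submodule.finrank_add_finrank_le_of_disjoint disjoint_images
  have finrank_stable := Submodule.finrank_add_eq_of_isCompl hF
  have finrank_unstable := Submodule.finrank_add_eq_of_isCompl hG
  omega

lemma isCompl_stable_unstable [FiniteDimensional ℝ E] (h : Φ.IsUniformlyQuasiHyperbolic T K)
    {x : B} (hx : x ∈ Φ.nonWandering) : IsCompl (Φ.stable x) (Φ.unstable x) :=
  (Submodule.isCompl_iff_disjoint _ _ (h.finrank_le_finrank_stable_add_finrank_unstable hx)).2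
    (h.disjoint_stable_unstable x)

end IsUniformlyQuasiHyperbolic

end LinearCocycle

theorem quasi_hyperbolic_hyperbolic_on_nonwandering_general [FiniteDimensional ℝ E]
    (Φ : LinearCocycle B E) {T K : ℝ} (h : Φ.IsUniformlyQuasiHyperbolic T K) :
    Φ.IsHyperbolicOn Φ.nonWandering := by
  obtain ⟨S₁, hS₁, forward_contraction⟩ := h.exists_forall_ge_norm_P_apply_lt one_half_pos
  obtain ⟨S₂, -, backward_contraction⟩ := h.reverse.exists_forall_ge_norm_P_apply_lt one_half_pos
  exact ⟨Φ.stable, Φ.unstable, fun t b _ => Φ.map_stable t b, fun t b _ => Φ.map_unstable t b,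
    fun b hb => h.isCompl_stable_unstable hb, max S₁ S₂, lt_max_of_lt_left hS₁,
    fun b _ => ⟨forward_contraction _ (le_max_left _ _) b,
      backward_contraction _ (le_max_right _ _) b⟩⟩

/-- A quasi-hyperbolic continuous linear cocycle over a compact base is
hyperbolic over the non-wandering set of the base flow. -/
theorem quasi_hyperbolic_hyperbolic_on_nonwandering
    [CompactSpace B] [FiniteDimensional ℝ E]
    (Φ : LinearCocycle B E) (hqh : Φ.IsQuasiHyperbolic) :
    Φ.IsHyperbolicOn Φ.nonWandering := by
  obtain ⟨T, K, h⟩ := hqh.exists_isUniformlyQuasiHyperbolic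
  exact quasi_hyperbolic_hyperbolic_on_nonwandering_general Φ h
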